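/- Let n ≥ 3, σ > 0, ρ ∈ (−1/n, 1), and let Z ~ N(μ, σ²Ξ) be an n-dimensional Gaussian random vector, where Ξ is the n×n matrix with diagonal entries 1 and all off-diagonal entries ρ, and suppose Pμ ≠ 0. Then MD(χ(Z)) = χ(μ) and MRL(χ(Z)) = ϱ_{n−1}(‖Pμ‖/(σ√(1−ρ))). -/

import Mathlib

open MeasureTheory ProbabilityTheory Matrix

noncomputable section

def euclNorm {n : ℕ} (x : Fin n → ℝ) : ℝ := Real.sqrt (∑ i, x i ^ 2)

def centerMat (n : ℕ) : Matrix (Fin n) (Fin n) ℝ :=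
  1 - (n : ℝ)⁻¹ • Matrix.of (fun _ _ => (1 : ℝ))

def chi {n : ℕ} (z : Fin n → ℝ) : Fin n → ℝ :=
  (euclNorm ((centerMat n).mulVec z))⁻¹ • (centerMat n).mulVec z

def meanVec {Ω : Type*} [MeasurableSpace Ω] (P : Measure Ω) {n : ℕ}
    (X : Ω → Fin n → ℝ) : Fin n → ℝ := fun i => ∫ ω, X ω i ∂P

def covMatrix {Ω : Type*} [MeasurableSpace Ω] (P : Measure Ω) {n : ℕ}
    (X : Ω → Fin n → ℝ) : Matrix (Fin n) (Fin n) ℝ :=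
  Matrix.of fun i j => ∫ ω, (X ω i - meanVec P X i) * (X ω j - meanVec P X j) ∂P

def MRL {Ω : Type*} [MeasurableSpace Ω] (P : Measure Ω) {n : ℕ}
    (X : Ω → Fin n → ℝ) : ℝ := euclNorm (meanVec P X)

def MD {Ω : Type*} [MeasurableSpace Ω] (P : Measure Ω) {n : ℕ}
    (X : Ω → Fin n → ℝ) : Fin n → ℝ := (euclNorm (meanVec P X))⁻¹ • meanVec P X

def stdGaussianPi (n : ℕ) : Measure (Fin n → ℝ) :=
  Measure.pi fun _ => gaussianReal 0 1

def IsGaussianVec {Ω : Type*} [MeasurableSpace Ω] (P : Measure Ω) {n : ℕ}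
    (Z : Ω → Fin n → ℝ) (m : Fin n → ℝ) (S : Matrix (Fin n) (Fin n) ℝ) : Prop :=
  ∃ A : Matrix (Fin n) (Fin n) ℝ, A * Aᵀ = S ∧
    Measure.map Z P = Measure.map (fun x => m + A.mulVec x) (stdGaussianPi n)

def ascFact (a : ℝ) (k : ℕ) : ℝ := ∏ i ∈ Finset.range k, (a + i)

def kummerM (a b z : ℝ) : ℝ := ∑' k : ℕ, (ascFact a k / ascFact b k) * z ^ k / (Nat.factorial k)

def varrho (m : ℕ) (x : ℝ) : ℝ :=
  (Real.Gamma (((m : ℝ) + 1) / 2) / (Real.sqrt 2 * Real.Gamma (((m : ℝ) + 2) / 2))) * x *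
    kummerM (1 / 2) (((m : ℝ) + 2) / 2) (-x ^ 2 / 2)

def fFun (m : ℕ) (x : ℝ) : ℝ :=
  1 - (((m : ℝ) - 1) / m) * kummerM 1 ((m : ℝ) / 2 + 1) (-x ^ 2 / 2) - (varrho m x) ^ 2

def gFun (m : ℕ) (x : ℝ) : ℝ :=
  (1 / (m : ℝ)) * kummerM 1 ((m : ℝ) / 2 + 1) (-x ^ 2 / 2)

def Vmat (n : ℕ) : Matrix (Fin n) (Fin n) ℝ :=
  Matrix.of fun i j =>
    if (j : ℕ) = n - 1 then 1 / Real.sqrt n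
    else if (i : ℕ) = (j : ℕ) then
      ((n : ℝ) - 1 - (j : ℕ)) / Real.sqrt (((n : ℝ) - 1 - (j : ℕ)) * ((n : ℝ) - (j : ℕ)))
    else if (j : ℕ) < (i : ℕ) then
      -(1 / Real.sqrt (((n : ℝ) - 1 - (j : ℕ)) * ((n : ℝ) - (j : ℕ))))
    else 0

def projMat (n : ℕ) : Matrix (Fin n) (Fin n) ℝ :=
  Matrix.diagonal fun i => if (i : ℕ) < n - 1 then 1 else 0

def embedZero {n : ℕ} (v : Fin (n - 1) → ℝ) : Fin n → ℝ :=
  fun i => if h : (i : ℕ) < n - 1 then v ⟨i, h⟩ else 0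

def Ximat (n : ℕ) (r : ℝ) : Matrix (Fin n) (Fin n) ℝ :=
  Matrix.of fun i j => if i = j then 1 else r

def stdNormCDF (x : ℝ) : ℝ := (gaussianReal 0 1 (Set.Iic x)).toReal

def thetaTilde : Fin 2 → ℝ := ![Real.sqrt 2 / 2, -(Real.sqrt 2 / 2)]

/-!
Orthogonal projection onto `𝟙ᗮ` turns `Z` into an isotropic Gaussian vector `X` on a space of
dimension `d = n - 1`, so everything rests on the mean of `X / ‖X‖` for `X ~ N(w, I)`. Writing
`‖x‖⁻¹ = (2π)^(-1/2) ∫₀^∞ s^(-1/2) exp (-s‖x‖²/2) ds` and exchanging integrals leaves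
`E[exp (-s‖X‖²/2) X] = (1 + s)^(-d/2 - 1) exp (-s‖w‖² / (2(1 + s))) w`, by completing the square in
each coordinate. The substitution `u = s / (1 + s)` then produces the moment generating function of
a Beta(1/2, (d + 1)/2) variable at `-‖w‖²/2`, which is Kummer's function. Its positivity gives both
the length and the direction of the mean.
-/

open NormedSpace (normalize_smul_of_pos norm_normalize_eq_one_iff)
open scoped NNReal RealInnerProductSpace

section Beta

variable {a b : ℝ}

lemma Gamma_add_natCast (ha : 0 < a) (k : ℕ) :
    Real.Gamma (a + k) = ascFact a k * Real.Gamma a := by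
  induction k with
  | zero => simp [ascFact]
  | succ k ih =>
    rw [Nat.cast_succ, ← add_assoc, Real.Gamma_add_one (by positivity), ih, ascFact,
      ascFact, Finset.prod_range_succ]
    ring

lemma beta_add_natCast (ha : 0 < a) (hb : 0 < b) (k : ℕ) :
    beta (a + k) b = beta a b * (ascFact a k / ascFact (a + b) k) := by
  rw [beta, beta, add_right_comm, Gamma_add_natCast ha, Gamma_add_natCast (add_pos ha hb)]
  ring

lemma measurable_betaPDF (a b : ℝ) : Measurable (betaPDF a b) :=
  (measurable_betaPDFReal a b).ennreal_ofReal

lemma betaPDF_eq_zero_of_notMem_Ioo {u : ℝ} (hu : u ∉ Set.Ioo (0 : ℝ) 1) : betaPDF a b u = 0 := by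
  rw [betaPDF_eq, if_neg fun h => hu ⟨h.1, h.2⟩, ENNReal.ofReal_zero]

lemma integral_betaMeasure (ha : 0 < a) (hb : 0 < b) (f : ℝ → ℝ) :
    ∫ u, f u ∂betaMeasure a b =
      (beta a b)⁻¹ * ∫ u in Set.Ioo (0 : ℝ) 1, u ^ (a - 1) * (1 - u) ^ (b - 1) * f u := by
  have hsupp : ∀ u ∉ Set.Ioo (0 : ℝ) 1, (betaPDF a b u).toReal • f u = 0 := fun u hu => by
    rw [betaPDF_eq_zero_of_notMem_Ioo hu, ENNReal.toReal_zero, zero_smul]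
  rw [betaMeasure, integral_withDensity_eq_integral_toReal_smul (measurable_betaPDF a b)
    (ae_of_all _ fun _ => ENNReal.ofReal_lt_top),
    ← setIntegral_eq_integral_of_forall_compl_eq_zero hsupp, ← integral_const_mul]
  refine setIntegral_congr_fun measurableSet_Ioo fun u hu => ?_
  rw [betaPDF, ENNReal.toReal_ofReal (betaPDFReal_pos hu.1 hu.2 ha hb).le, betaPDFReal,
    if_pos ⟨hu.1, hu.2⟩, smul_eq_mul, one_div]
  ring

lemma integral_pow_betaMeasure (ha : 0 < a) (hb : 0 < b) (k : ℕ) :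
    ∫ u, u ^ k ∂betaMeasure a b = ascFact a k / ascFact (a + b) k := by
  have hak : 0 < a + k := by positivity
  have htotal := integral_betaMeasure hak hb fun _ => 1
  have := isProbabilityMeasureBeta hak hb
  rw [integral_const, probReal_univ, one_smul, eq_inv_mul_iff_mul_eq₀ (beta_pos hak hb).ne',
    mul_one] at htotal
  have hshift : ∫ u in Set.Ioo (0 : ℝ) 1, u ^ (a - 1) * (1 - u) ^ (b - 1) * u ^ k =
      beta (a + k) b := by
    rw [htotal]
    refine setIntegral_congr_fun measurableSet_Ioo fun u hu => ?_
    rw [add_sub_right_comm, Real.rpow_add hu.1, Real.rpow_natCast]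
    ring
  rw [integral_betaMeasure ha hb, hshift, beta_add_natCast ha hb,
    inv_mul_cancel_left₀ (beta_pos ha hb).ne']

lemma ae_mem_Ioo_betaMeasure (a b : ℝ) : ∀ᵐ u ∂betaMeasure a b, u ∈ Set.Ioo (0 : ℝ) 1 := by
  rw [betaMeasure, ae_withDensity_iff (measurable_betaPDF a b)]
  exact ae_of_all _ fun u hu => of_not_not fun hmem => hu (betaPDF_eq_zero_of_notMem_Ioo hmem)

lemma mgf_id_betaMeasure (ha : 0 < a) (hb : 0 < b) (z : ℝ) :
    mgf id (betaMeasure a b) z = kummerM a (a + b) z := by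
  have := isProbabilityMeasureBeta ha hb
  have hbound : ∀ k : ℕ, ∀ᵐ u ∂betaMeasure a b, ‖(z * u) ^ k / k.factorial‖ ≤
      |z| ^ k / k.factorial := fun k => by
    filter_upwards [ae_mem_Ioo_betaMeasure a b] with u hu
    have habs : |z * u| ≤ |z| := by
      rw [abs_mul, abs_of_pos hu.1]
      exact mul_le_of_le_one_right (abs_nonneg z) hu.2.le
    rw [norm_div, norm_pow, Real.norm_natCast, Real.norm_eq_abs]
    gcongr
  have hint : ∀ k : ℕ, Integrable (fun u : ℝ => (z * u) ^ k / k.factorial) (betaMeasure a b) :=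
    fun k => .of_bound (Measurable.aestronglyMeasurable (by fun_prop)) _ (hbound k)
  have hsummable : Summable fun k : ℕ =>
      ∫ u, ‖(z * u) ^ k / k.factorial‖ ∂betaMeasure a b := by
    refine .of_nonneg_of_le (fun k => integral_nonneg fun _ => norm_nonneg _) (fun k => ?_)
      (Real.summable_pow_div_factorial |z|)
    simpa using integral_mono_ae (hint k).norm (integrable_const _) (hbound k)
  calc mgf id (betaMeasure a b) z
      = ∫ u, ∑' k : ℕ, (z * u) ^ k / k.factorial ∂betaMeasure a b := by
        simp only [mgf, id_eq, Real.exp_eq_exp_ℝ, NormedSpace.exp_eq_tsum_div]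
    _ = ∑' k : ℕ, ∫ u, (z * u) ^ k / k.factorial ∂betaMeasure a b :=
        (hasSum_integral_of_summable_integral_norm hint hsummable).tsum_eq.symm
    _ = kummerM a (a + b) z := by
        refine tsum_congr fun k => ?_
        simp only [mul_pow]
        rw [integral_div, integral_const_mul, integral_pow_betaMeasure ha hb]
        ring

lemma kummerM_pos (ha : 0 < a) (hb : 0 < b) (z : ℝ) : 0 < kummerM a (a + b) z := by
  have := isProbabilityMeasureBeta ha hb
  rw [← mgf_id_betaMeasure ha hb]
  refine mgf_pos (integrable_exp_mul_of_mem_Icc aemeasurable_id (a := 0) (b := 1) ?_)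
  filter_upwards [ae_mem_Ioo_betaMeasure a b] with u hu using Set.Ioo_subset_Icc_self hu

lemma image_div_one_add_Ioi : (fun s : ℝ => s / (1 + s)) '' Set.Ioi 0 = Set.Ioo 0 1 := by
  ext u
  constructor
  · rintro ⟨s, hs : 0 < s, rfl⟩
    exact ⟨by positivity, (div_lt_one (by positivity)).mpr (by linarith)⟩
  · rintro ⟨hu0, hu1⟩
    have hu : 0 < 1 - u := sub_pos.mpr hu1
    refine ⟨u / (1 - u), div_pos hu0 hu, ?_⟩
    field_simp
    ring

lemma integral_Ioo_eq_integral_Ioi_div_one_add (g : ℝ → ℝ) :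
    ∫ u in Set.Ioo (0 : ℝ) 1, g u =
      ∫ s in Set.Ioi (0 : ℝ), ((1 + s) ^ 2)⁻¹ * g (s / (1 + s)) := by
  have hderiv : ∀ s ∈ Set.Ioi (0 : ℝ),
      HasDerivWithinAt (fun s => s / (1 + s)) ((1 + s) ^ 2)⁻¹ (Set.Ioi 0) s := by
    intro s (hs : 0 < s)
    have h := (hasDerivAt_id' s).div ((hasDerivAt_id' s).const_add 1) (by positivity)
    refine (h.congr_deriv ?_).hasDerivWithinAt
    ring
  have hinj : Set.InjOn (fun s : ℝ => s / (1 + s)) (Set.Ioi 0) := by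
    intro s (hs : 0 < s) t (ht : 0 < t) (h : s / (1 + s) = t / (1 + t))
    field_simp at h
    linarith
  rw [← image_div_one_add_Ioi,
    integral_image_eq_integral_abs_deriv_smul measurableSet_Ioi hderiv hinj]
  refine setIntegral_congr_fun measurableSet_Ioi fun s _ => ?_
  rw [abs_of_nonneg (by positivity), smul_eq_mul]

lemma integral_rpow_mul_one_add_rpow_mul_comp (ha : 0 < a) (hb : 0 < b) (f : ℝ → ℝ) :
    ∫ s in Set.Ioi (0 : ℝ), s ^ (a - 1) * (1 + s) ^ (-(a + b)) * f (s / (1 + s)) =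
      beta a b * ∫ u, f u ∂betaMeasure a b := by
  rw [integral_betaMeasure ha hb, mul_inv_cancel_left₀ (beta_pos ha hb).ne',
    integral_Ioo_eq_integral_Ioi_div_one_add]
  refine setIntegral_congr_fun measurableSet_Ioi fun s (hs : 0 < s) => ?_
  have h1s : 0 < 1 + s := by positivity
  have hsub : 1 - s / (1 + s) = (1 + s)⁻¹ := by field_simp; ring
  have hexp : (1 + s) ^ (-(a + b)) =
      ((1 + s) ^ 2)⁻¹ * (((1 + s) ^ (a - 1))⁻¹ * ((1 + s) ^ (b - 1))⁻¹) := by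
    rw [← Real.rpow_natCast, ← Real.rpow_neg h1s.le, ← Real.rpow_neg h1s.le,
      ← Real.rpow_neg h1s.le, ← Real.rpow_add h1s, ← Real.rpow_add h1s]
    congr 1
    push_cast
    ring
  rw [hsub, Real.div_rpow hs.le h1s.le, Real.inv_rpow h1s.le, hexp]
  ring

lemma integral_rpow_mul_one_add_rpow_mul_exp (ha : 0 < a) (hb : 0 < b) (z : ℝ) :
    ∫ s in Set.Ioi (0 : ℝ), s ^ (a - 1) * (1 + s) ^ (-(a + b)) * Real.exp (z * (s / (1 + s))) =
      beta a b * kummerM a (a + b) z := by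
  rw [integral_rpow_mul_one_add_rpow_mul_comp ha hb fun u => Real.exp (z * u),
    ← mgf_id_betaMeasure ha hb]
  simp only [mgf, id_eq]

end Beta

section Gaussian

lemma integral_exp_neg_mul_sq_mul_gaussianReal (m : ℝ) (v s : ℝ≥0) (f : ℝ → ℝ) :
    ∫ x, Real.exp (-s * x ^ 2 / 2) * f x ∂gaussianReal m v =
      (√(1 + s * v))⁻¹ * Real.exp (-s * m ^ 2 / (2 * (1 + s * v))) *
        ∫ x, f x ∂gaussianReal (m / (1 + s * v)) (v / (1 + s * v)) := by
  rcases eq_or_ne v 0 with rfl | hv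
  · simp
  have hsv : 0 < 1 + (s : ℝ) * v := by positivity
  rw [integral_gaussianReal_eq_integral_smul hv, integral_gaussianReal_eq_integral_smul (by simpa),
    ← integral_const_mul]
  refine integral_congr_ae (ae_of_all _ fun x => ?_)
  simp only [gaussianPDFReal, smul_eq_mul, NNReal.coe_div, NNReal.coe_add, NNReal.coe_one,
    NNReal.coe_mul]
  have hsqrt : √(2 * Real.pi * (v / (1 + s * v))) = √(2 * Real.pi * v) / √(1 + s * v) := by
    rw [← mul_div_assoc, Real.sqrt_div' _ hsv.le]
  have hsquare : Real.exp (-(x - m) ^ 2 / (2 * v)) * Real.exp (-s * x ^ 2 / 2) =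
      Real.exp (-s * m ^ 2 / (2 * (1 + s * v))) *
        Real.exp (-(x - m / (1 + s * v)) ^ 2 / (2 * (v / (1 + s * v)))) := by
    rw [← Real.exp_add, ← Real.exp_add]
    congr 1
    field_simp
    ring
  rw [hsqrt]
  linear_combination (norm := (field_simp; ring)) (√(2 * Real.pi * v))⁻¹ * f x * hsquare

lemma integral_exp_neg_mul_sq_gaussianReal_one (m : ℝ) (s : ℝ≥0) :
    ∫ x, Real.exp (-s * x ^ 2 / 2) ∂gaussianReal m 1 =
      (√(1 + s))⁻¹ * Real.exp (-s * m ^ 2 / (2 * (1 + s))) := by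
  simpa using integral_exp_neg_mul_sq_mul_gaussianReal m 1 s fun _ => 1

lemma integral_exp_neg_mul_sq_mul_self_gaussianReal_one (m : ℝ) (s : ℝ≥0) :
    ∫ x, Real.exp (-s * x ^ 2 / 2) * x ∂gaussianReal m 1 =
      (√(1 + s))⁻¹ * Real.exp (-s * m ^ 2 / (2 * (1 + s))) * (m / (1 + s)) := by
  simpa using integral_exp_neg_mul_sq_mul_gaussianReal m 1 s fun x => x

lemma inv_sqrt_pow_mul_inv {x : ℝ} (hx : 0 < x) (d : ℕ) :
    (√x)⁻¹ ^ d * x⁻¹ = x ^ (-((d : ℝ) / 2 + 1)) := by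
  rw [neg_add, Real.rpow_add hx, Real.rpow_neg_one, Real.sqrt_eq_rpow, ← Real.rpow_neg hx.le,
    ← Real.rpow_mul_natCast hx.le]
  congr 2
  ring

lemma integral_pi_gaussianReal_exp_neg_mul_sum_sq_mul {ι : Type*} [Fintype ι]
    (m : ι → ℝ) (j : ι) (s : ℝ≥0) :
    ∫ x, Real.exp (-s * (∑ i, x i ^ 2) / 2) * x j ∂Measure.pi (fun i => gaussianReal (m i) 1) =
      (1 + s : ℝ) ^ (-((Fintype.card ι : ℝ) / 2 + 1)) *
        Real.exp (-s * (∑ i, m i ^ 2) / (2 * (1 + s))) * m j := by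
  classical
  have hfactor : ∀ x : ι → ℝ, Real.exp (-s * (∑ i, x i ^ 2) / 2) * x j =
      ∏ i, Real.exp (-s * x i ^ 2 / 2) * (if i = j then x i else 1) := fun x => by
    rw [Finset.prod_mul_distrib, ← Real.exp_sum, ← Finset.sum_div, ← Finset.mul_sum,
      Finset.prod_ite_eq' Finset.univ j, if_pos (Finset.mem_univ j)]
  have hcoord : ∀ i, ∫ x, Real.exp (-s * x ^ 2 / 2) * (if i = j then x else 1)
      ∂gaussianReal (m i) 1 = (√(1 + s))⁻¹ * Real.exp (-s * m i ^ 2 / (2 * (1 + s))) *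
        (if i = j then m i / (1 + s) else 1) := fun i => by
    split_ifs
    · exact integral_exp_neg_mul_sq_mul_self_gaussianReal_one (m i) s
    · simpa only [mul_one] using integral_exp_neg_mul_sq_gaussianReal_one (m i) s
  simp only [hfactor]
  rw [integral_fintype_prod_eq_prod
    (f := fun i x => Real.exp (-s * x ^ 2 / 2) * if i = j then x else 1),
    Finset.prod_congr rfl fun i _ => hcoord i, Finset.prod_mul_distrib, Finset.prod_mul_distrib,
    Finset.prod_const, Finset.card_univ, ← Real.exp_sum, ← Finset.sum_div, ← Finset.mul_sum,
    Finset.prod_ite_eq' Finset.univ j, if_pos (Finset.mem_univ j),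
    ← inv_sqrt_pow_mul_inv (by positivity : (0 : ℝ) < 1 + s)]
  ring

variable {E : Type*} [NormedAddCommGroup E] [InnerProductSpace ℝ E] [FiniteDimensional ℝ E]
  [MeasurableSpace E] [BorelSpace E]

lemma map_const_add_stdGaussian {ι : Type*} [Fintype ι] (b : OrthonormalBasis ι ℝ E) (w : E) :
    (stdGaussian E).map (w + ·) =
      (Measure.pi fun i => gaussianReal ⟪b i, w⟫ 1).map fun x => ∑ i, x i • b i := by
  have hshift : (Measure.pi fun i => gaussianReal ⟪b i, w⟫ 1) =
      (Measure.pi fun _ : ι => gaussianReal 0 1).map fun x i => ⟪b i, w⟫ + x i := by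
    rw [Measure.pi_map_pi fun i => (measurable_const_add ⟪b i, w⟫).aemeasurable]
    simp only [gaussianReal_map_const_add, zero_add]
  rw [hshift, stdGaussian_eq_map_pi_orthonormalBasis b, Measure.map_map (by fun_prop) (by fun_prop),
    Measure.map_map (by fun_prop) (by fun_prop)]
  congr 1
  ext x
  simp only [Function.comp_apply, add_smul, Finset.sum_add_distrib, b.sum_repr']

lemma integral_exp_neg_mul_norm_sq_smul_map_const_add_stdGaussian (w : E) (s : ℝ≥0) :
    ∫ x, Real.exp (-s * ‖x‖ ^ 2 / 2) • x ∂(stdGaussian E).map (w + ·) =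
      ((1 + s : ℝ) ^ (-((Module.finrank ℝ E : ℝ) / 2 + 1)) *
        Real.exp (-s * ‖w‖ ^ 2 / (2 * (1 + s)))) • w := by
  let b := stdOrthonormalBasis ℝ E
  have hint : Integrable (fun x : E => Real.exp (-s * ‖x‖ ^ 2 / 2) • x)
      ((stdGaussian E).map (w + ·)) := by
    refine (IsGaussian.integrable_id (μ := (stdGaussian E).map (w + ·))).mono
      (Measurable.aestronglyMeasurable (by fun_prop)) (ae_of_all _ fun x => ?_)
    rw [norm_smul, Real.norm_of_nonneg (Real.exp_nonneg _)]
    refine mul_le_of_le_one_left (norm_nonneg x) (Real.exp_le_one_iff.mpr ?_)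
    rw [neg_mul, neg_div]
    exact neg_nonpos.mpr (by positivity)
  refine InnerProductSpace.ext_inner_left_basis b.toBasis fun j => ?_
  rw [b.coe_toBasis, ← integral_inner hint, map_const_add_stdGaussian b,
    integral_map (Measurable.aemeasurable (by fun_prop))
      (Measurable.aestronglyMeasurable (by fun_prop))]
  have hcoord : ∀ (x : Fin (Module.finrank ℝ E) → ℝ) k, ⟪b k, ∑ i, x i • b i⟫ = x k := fun x k =>
    b.orthonormal.inner_right_fintype x k
  have hnorm : ∀ x : Fin (Module.finrank ℝ E) → ℝ, ‖∑ i, x i • b i‖ ^ 2 = ∑ i, x i ^ 2 :=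
    fun x => by simp only [← b.sum_sq_inner_right (∑ i, x i • b i), hcoord]
  simp only [inner_smul_right, hcoord, hnorm]
  rw [integral_pi_gaussianReal_exp_neg_mul_sum_sq_mul, Fintype.card_fin, b.sum_sq_inner_right]

lemma map_stdGaussian_of_comp_adjoint_eq_id {F : Type*} [NormedAddCommGroup F]
    [InnerProductSpace ℝ F] [FiniteDimensional ℝ F] [MeasurableSpace F] [BorelSpace F]
    (L : E →L[ℝ] F) (hL : L ∘L L.adjoint = .id ℝ F) :
    (stdGaussian E).map L = stdGaussian F := by
  refine Measure.ext_of_charFun (funext fun t => ?_)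
  have hnorm : ‖L.adjoint t‖ ^ 2 = ‖t‖ ^ 2 := by
    rw [← real_inner_self_eq_norm_sq, ← real_inner_self_eq_norm_sq,
      ContinuousLinearMap.adjoint_inner_left, ← ContinuousLinearMap.comp_apply, hL,
      ContinuousLinearMap.id_apply]
  have hpull : charFun ((stdGaussian E).map L) t = charFun (stdGaussian E) (L.adjoint t) := by
    rw [charFun_apply, charFun_apply,
      integral_map (by fun_prop) (Measurable.aestronglyMeasurable (by fun_prop))]
    simp only [ContinuousLinearMap.adjoint_inner_right]
  rw [hpull, charFun_stdGaussian, charFun_stdGaussian]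
  norm_cast
  rw [hnorm]

end Gaussian

section Normalize

lemma integrableOn_rpow_mul_exp_neg_mul_sq_div_two {a r : ℝ} (ha : 0 < a) (hr : 0 < r) :
    IntegrableOn (fun s : ℝ => s ^ (a - 1) * Real.exp (-s * r ^ 2 / 2)) (Set.Ioi 0) := by
  refine (integrableOn_rpow_mul_exp_neg_mul_rpow (p := 1) (s := a - 1) (b := r ^ 2 / 2)
    (by linarith) one_pos (by positivity)).congr_fun (fun s _ => ?_) measurableSet_Ioi
  simp only [Real.rpow_one]
  ring_nf

lemma integral_rpow_mul_exp_neg_mul_sq_div_two {a r : ℝ} (ha : 0 < a) (hr : 0 < r) :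
    ∫ s in Set.Ioi (0 : ℝ), s ^ (a - 1) * Real.exp (-s * r ^ 2 / 2) =
      (2 / r ^ 2) ^ a * Real.Gamma a := by
  rw [← one_div_div, ← Real.integral_rpow_mul_exp_neg_mul_Ioi ha (by positivity)]
  refine setIntegral_congr_fun measurableSet_Ioi fun s _ => ?_
  ring_nf

variable {E : Type*} [NormedAddCommGroup E] [NormedSpace ℝ E]

lemma norm_normalize_le_one (x : E) : ‖NormedSpace.normalize x‖ ≤ 1 := by
  rcases eq_or_ne x 0 with rfl | hx
  · simp
  · exact (norm_normalize_eq_one_iff.mpr hx).le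

lemma integrableOn_rpow_mul_exp_neg_mul_sq_smul {a : ℝ} (ha : 0 < a) (x : E) :
    IntegrableOn (fun s : ℝ => (s ^ (a - 1) * Real.exp (-s * ‖x‖ ^ 2 / 2)) • x) (Set.Ioi 0) := by
  rcases eq_or_ne x 0 with rfl | hx
  · simp only [smul_zero, integrableOn_zero]
  · exact (integrableOn_rpow_mul_exp_neg_mul_sq_div_two ha (norm_pos_iff.mpr hx)).smul_const x

lemma integral_rpow_neg_half_mul_exp_neg_mul_sq_smul [CompleteSpace E] (x : E) :
    ∫ s in Set.Ioi (0 : ℝ), (s ^ (1 / 2 - 1 : ℝ) * Real.exp (-s * ‖x‖ ^ 2 / 2)) • x =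
      √(2 * Real.pi) • NormedSpace.normalize x := by
  rcases eq_or_ne x 0 with rfl | hx
  · simp
  rw [integral_smul_const,
    integral_rpow_mul_exp_neg_mul_sq_div_two one_half_pos (norm_pos_iff.mpr hx),
    ← Real.sqrt_eq_rpow, Real.Gamma_one_half_eq, ← Real.sqrt_mul (by positivity),
    div_mul_eq_mul_div, Real.sqrt_div' _ (sq_nonneg _), Real.sqrt_sq (norm_nonneg x),
    NormedSpace.normalize, smul_smul, div_eq_mul_inv]

variable [MeasurableSpace E] [BorelSpace E]

lemma measurable_normalize [SecondCountableTopology E] :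
    Measurable (NormedSpace.normalize : E → E) :=
  measurable_norm.inv.smul measurable_id

lemma integrable_normalize [SecondCountableTopology E] (ν : Measure E) [IsFiniteMeasure ν] :
    Integrable (NormedSpace.normalize : E → E) ν :=
  .of_bound measurable_normalize.aestronglyMeasurable 1 (ae_of_all _ norm_normalize_le_one)

lemma integrable_prod_rpow_neg_half_mul_exp_neg_mul_sq_smul [SecondCountableTopology E]
    (ν : Measure E) [IsFiniteMeasure ν] :
    Integrable (fun p : E × ℝ => (p.2 ^ (1 / 2 - 1 : ℝ) * Real.exp (-p.2 * ‖p.1‖ ^ 2 / 2)) • p.1)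
      (ν.prod (volume.restrict (Set.Ioi 0))) := by
  refine (integrable_prod_iff (Measurable.aestronglyMeasurable (by fun_prop))).mpr
    ⟨ae_of_all _ (integrableOn_rpow_mul_exp_neg_mul_sq_smul one_half_pos), ?_⟩
  have hnorm : ∀ x : E, ∫ s in Set.Ioi (0 : ℝ),
      ‖(s ^ (1 / 2 - 1 : ℝ) * Real.exp (-s * ‖x‖ ^ 2 / 2)) • x‖ =
        √(2 * Real.pi) * ‖NormedSpace.normalize x‖ := fun x => by
      rw [show ‖NormedSpace.normalize x‖ = NormedSpace.normalize ‖x‖ by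
        simp only [NormedSpace.normalize, norm_smul, norm_inv, norm_norm, smul_eq_mul],
        ← smul_eq_mul, ← integral_rpow_neg_half_mul_exp_neg_mul_sq_smul, norm_norm]
      refine setIntegral_congr_fun measurableSet_Ioi fun s (hs : 0 < s) => ?_
      rw [norm_smul, Real.norm_of_nonneg (by positivity), smul_eq_mul]
  simp only [hnorm]
  exact (integrable_normalize ν).norm.const_mul _

lemma integral_normalize [CompleteSpace E] [SecondCountableTopology E] (ν : Measure E)
    [IsFiniteMeasure ν] :
    ∫ x, NormedSpace.normalize x ∂ν = (√(2 * Real.pi))⁻¹ • ∫ s in Set.Ioi (0 : ℝ),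
      s ^ (1 / 2 - 1 : ℝ) • ∫ x, Real.exp (-s * ‖x‖ ^ 2 / 2) • x ∂ν := by
  have hpi : √(2 * Real.pi) ≠ 0 := by positivity
  rw [eq_inv_smul_iff₀ hpi, ← integral_smul]
  simp only [← integral_rpow_neg_half_mul_exp_neg_mul_sq_smul, ← integral_smul, ← smul_assoc]
  exact integral_integral_swap (integrable_prod_rpow_neg_half_mul_exp_neg_mul_sq_smul ν)

end Normalize

section Varrho

lemma varrho_eq_beta_mul_kummerM_mul (m : ℕ) (x : ℝ) :
    varrho m x = (√(2 * Real.pi))⁻¹ *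
      (beta (1 / 2) ((m + 1) / 2) * kummerM (1 / 2) (1 / 2 + (m + 1) / 2) (-x ^ 2 / 2)) * x := by
  rw [varrho, beta, Real.Gamma_one_half_eq, Real.sqrt_mul zero_le_two,
    show (1 / 2 + (m + 1) / 2 : ℝ) = (m + 2) / 2 by ring]
  field_simp

lemma varrho_pos (m : ℕ) {x : ℝ} (hx : 0 < x) : 0 < varrho m x := by
  have hm : (0 : ℝ) < (m + 1) / 2 := by positivity
  have hbeta := beta_pos one_half_pos hm
  have hkummer := kummerM_pos one_half_pos hm (-x ^ 2 / 2)
  rw [varrho_eq_beta_mul_kummerM_mul]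
  positivity

variable {E : Type*} [NormedAddCommGroup E] [InnerProductSpace ℝ E] [FiniteDimensional ℝ E]
  [MeasurableSpace E] [BorelSpace E]

theorem integral_normalize_map_const_add_stdGaussian (w : E) :
    ∫ x, NormedSpace.normalize x ∂(stdGaussian E).map (w + ·) =
      varrho (Module.finrank ℝ E) ‖w‖ • NormedSpace.normalize w := by
  have := FiniteDimensional.complete ℝ E
  set d := Module.finrank ℝ E with hd
  have hinner : ∀ s ∈ Set.Ioi (0 : ℝ), s ^ (1 / 2 - 1 : ℝ) •
      ∫ x, Real.exp (-s * ‖x‖ ^ 2 / 2) • x ∂(stdGaussian E).map (w + ·) =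
        (s ^ (1 / 2 - 1 : ℝ) * (1 + s) ^ (-(1 / 2 + ((d : ℝ) + 1) / 2)) *
          Real.exp (-‖w‖ ^ 2 / 2 * (s / (1 + s)))) • w := by
    intro s (hs : 0 < s)
    lift s to ℝ≥0 using hs.le
    rw [integral_exp_neg_mul_norm_sq_smul_map_const_add_stdGaussian, smul_smul, ← hd,
      show (1 / 2 + ((d : ℝ) + 1) / 2) = d / 2 + 1 by ring, mul_assoc,
      show -‖w‖ ^ 2 / 2 * (s / (1 + s) : ℝ) = -s * ‖w‖ ^ 2 / (2 * (1 + s)) by field_simp]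
  have hbeta := integral_rpow_mul_one_add_rpow_mul_exp one_half_pos
    (by positivity : 0 < ((d : ℝ) + 1) / 2) (-‖w‖ ^ 2 / 2)
  rw [integral_normalize, setIntegral_congr_fun measurableSet_Ioi hinner, integral_smul_const,
    hbeta, smul_smul, varrho_eq_beta_mul_kummerM_mul, mul_smul _ ‖w‖,
    NormedSpace.norm_smul_normalize]

end Varrho

section Centering

lemma euclNorm_eq_norm_toLp {n : ℕ} (x : Fin n → ℝ) : euclNorm x = ‖WithLp.toLp 2 x‖ := by
  simp only [euclNorm, EuclideanSpace.norm_eq, Real.norm_eq_abs, sq_abs]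

lemma euclNorm_smul {n : ℕ} (c : ℝ) (x : Fin n → ℝ) : euclNorm (c • x) = |c| * euclNorm x := by
  rw [euclNorm_eq_norm_toLp, euclNorm_eq_norm_toLp, WithLp.toLp_smul, norm_smul, Real.norm_eq_abs]

lemma euclNorm_pos {n : ℕ} {x : Fin n → ℝ} (hx : x ≠ 0) : 0 < euclNorm x := by
  rw [euclNorm_eq_norm_toLp, norm_pos_iff]
  simpa using hx

lemma euclNorm_chi {n : ℕ} {z : Fin n → ℝ} (hz : centerMat n *ᵥ z ≠ 0) : euclNorm (chi z) = 1 := by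
  have hpos := euclNorm_pos hz
  rw [chi, euclNorm_smul, abs_of_pos (inv_pos.mpr hpos), inv_mul_cancel₀ hpos.ne']

lemma centerMat_mul_one_all (n : ℕ) :
    centerMat n * Matrix.of (fun _ _ => (1 : ℝ)) = (0 : Matrix (Fin n) (Fin n) ℝ) := by
  ext i j
  have hn : (n : ℝ) ≠ 0 := Nat.cast_ne_zero.mpr i.pos.ne'
  simp [centerMat, Matrix.mul_apply, Matrix.one_apply, hn]

lemma centerMat_mul_self (n : ℕ) : centerMat n * centerMat n = centerMat n := by
  nth_rewrite 2 [centerMat]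
  rw [mul_sub, mul_one, Matrix.mul_smul, centerMat_mul_one_all, smul_zero, sub_zero]

lemma centerMat_mul_Ximat (n : ℕ) (ρ : ℝ) :
    centerMat n * Ximat n ρ = (1 - ρ) • centerMat n := by
  have hXi : Ximat n ρ = (1 - ρ) • 1 + ρ • Matrix.of (fun _ _ => (1 : ℝ)) := by
    ext i j
    by_cases h : i = j <;> simp [Ximat, h]
  rw [hXi, mul_add, Matrix.mul_smul, Matrix.mul_smul, mul_one, centerMat_mul_one_all, smul_zero,
    add_zero]

lemma centerMat_mul_smul_Ximat_mul_centerMat (n : ℕ) (σ : ℝ) {ρ : ℝ} (hρ : ρ ≤ 1) :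
    centerMat n * (σ ^ 2 • Ximat n ρ) * centerMat n = (σ * √(1 - ρ)) ^ 2 • centerMat n := by
  rw [Matrix.mul_smul, centerMat_mul_Ximat, Matrix.smul_mul, Matrix.smul_mul, centerMat_mul_self,
    smul_smul, mul_pow, Real.sq_sqrt (sub_nonneg.mpr hρ)]

/-- The orthogonal complement of `(1, …, 1)`, i.e. the range of the centering matrix. It lives in
`EuclideanSpace ℝ (Fin n)` because `Fin n → ℝ` carries the sup norm. -/
def centeredSubspace (n : ℕ) : Submodule ℝ (EuclideanSpace ℝ (Fin n)) :=
  (Submodule.span ℝ {WithLp.toLp 2 (1 : Fin n → ℝ)})ᗮ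

lemma finrank_centeredSubspace (n : ℕ) : Module.finrank ℝ (centeredSubspace n) = n - 1 := by
  have hsum := (Submodule.span ℝ
    {WithLp.toLp 2 (1 : Fin n → ℝ)}).finrank_add_finrank_orthogonal
  rw [finrank_euclideanSpace_fin] at hsum
  rcases n.eq_zero_or_pos with rfl | hn
  · exact (Nat.add_eq_zero_iff.mp hsum).2
  · have : Nonempty (Fin n) := ⟨⟨0, hn⟩⟩
    rw [finrank_span_singleton (by simp)] at hsum
    exact Nat.eq_sub_of_add_eq' hsum

lemma centerMat_mulVec_apply {n : ℕ} (z : Fin n → ℝ) (i : Fin n) :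
    (centerMat n *ᵥ z) i = z i - (n : ℝ)⁻¹ * ∑ j, z j := by
  rw [centerMat, Matrix.sub_mulVec, Matrix.one_mulVec, Matrix.smul_mulVec]
  simp [Matrix.mulVec, dotProduct]

lemma starProjection_centeredSubspace (n : ℕ) (x : EuclideanSpace ℝ (Fin n)) :
    (centeredSubspace n).starProjection x = toEuclideanCLM (𝕜 := ℝ) (centerMat n) x := by
  rw [centeredSubspace, Submodule.starProjection_orthogonal_val, Submodule.starProjection_singleton]
  ext i
  rw [ofLp_toEuclideanCLM, centerMat_mulVec_apply]
  simp only [PiLp.inner_apply, Pi.one_apply, RCLike.inner_apply, Real.ringHom_apply, mul_one,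
    EuclideanSpace.norm_eq, norm_one, one_pow, Finset.sum_const, Finset.card_univ,
    Fintype.card_fin, nsmul_eq_mul, Nat.cast_nonneg, Real.sq_sqrt, map_natCast, PiLp.sub_apply,
    PiLp.smul_apply, smul_eq_mul]
  ring

/-- The centering `z ↦ Pz` as a map onto `centeredSubspace n`. -/
def centering (n : ℕ) : (Fin n → ℝ) →L[ℝ] centeredSubspace n :=
  (centeredSubspace n).orthogonalProjectionOnto ∘L
    (EuclideanSpace.equiv (Fin n) ℝ).symm.toContinuousLinearMap

lemma coe_centering {n : ℕ} (z : Fin n → ℝ) :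
    (centering n z : EuclideanSpace ℝ (Fin n)) = WithLp.toLp 2 (centerMat n *ᵥ z) :=
  starProjection_centeredSubspace n (WithLp.toLp 2 z)

lemma norm_centering {n : ℕ} (z : Fin n → ℝ) : ‖centering n z‖ = euclNorm (centerMat n *ᵥ z) := by
  rw [euclNorm_eq_norm_toLp, ← coe_centering, Submodule.coe_norm]

lemma toLp_chi {n : ℕ} (z : Fin n → ℝ) :
    WithLp.toLp 2 (chi z) =
      (NormedSpace.normalize (centering n z) : centeredSubspace n) := by
  rw [chi, WithLp.toLp_smul, ← coe_centering, ← norm_centering]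
  rfl

lemma toLp_meanVec {Ω : Type*} [MeasurableSpace Ω] {P : Measure Ω} {n : ℕ} {X : Ω → Fin n → ℝ}
    (hX : Integrable (fun ω => WithLp.toLp 2 (X ω)) P) :
    WithLp.toLp 2 (meanVec P X) = ∫ ω, WithLp.toLp 2 (X ω) ∂P := by
  ext i
  exact (eval_integral_piLp hX.eval_piLp i).symm

lemma integrable_toLp_chi {Ω : Type*} [MeasurableSpace Ω] {P : Measure Ω} [IsFiniteMeasure P]
    {n : ℕ} {Z : Ω → Fin n → ℝ} (hZ : AEMeasurable Z P) :
    Integrable (fun ω => WithLp.toLp 2 (chi (Z ω))) P := by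
  simp only [toLp_chi]
  refine .of_bound ?_ 1 (ae_of_all _ fun ω => norm_normalize_le_one (centering n (Z ω)))
  have hmeas : Measurable fun z => NormedSpace.normalize (centering n z) :=
    measurable_normalize.comp (by fun_prop)
  exact (hmeas.subtype_val.comp_aemeasurable hZ).aestronglyMeasurable

end Centering

lemma smul_orthogonalProjectionOnto_comp_adjoint_eq_id {n : ℕ} {A : Matrix (Fin n) (Fin n) ℝ}
    {τ : ℝ} (hτ : τ ≠ 0) (hA : centerMat n * (A * Aᵀ) * centerMat n = τ ^ 2 • centerMat n) :
    let L := τ⁻¹ • (centeredSubspace n).orthogonalProjectionOnto ∘L toEuclideanCLM (𝕜 := ℝ) A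
    L ∘L L.adjoint = .id ℝ (centeredSubspace n) := by
  intro L
  ext1 v
  have hv : toEuclideanCLM (𝕜 := ℝ) (centerMat n) v = v := by
    rw [← starProjection_centeredSubspace, Submodule.starProjection_mem_subspace_eq_self]
  have hadjoint : L.adjoint v = τ⁻¹ • toEuclideanCLM (𝕜 := ℝ) Aᵀ v := by
    rw [← conjTranspose_eq_transpose_of_trivial, ← star_eq_conjTranspose, map_star]
    simp only [L, map_smulₛₗ, ContinuousLinearMap.adjoint_comp,
      Submodule.adjoint_orthogonalProjectionOnto, ContinuousLinearMap.star_eq_adjoint]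
    rfl
  refine Subtype.ext ?_
  calc ((L ∘L L.adjoint) v : EuclideanSpace ℝ (Fin n))
      = (τ⁻¹ * τ⁻¹) • toEuclideanCLM (𝕜 := ℝ) (centerMat n) (toEuclideanCLM (𝕜 := ℝ) A
          (toEuclideanCLM (𝕜 := ℝ) Aᵀ (toEuclideanCLM (𝕜 := ℝ) (centerMat n) v))) := by
        rw [ContinuousLinearMap.comp_apply, hadjoint, map_smul, hv,
          ← starProjection_centeredSubspace, mul_smul]
        rfl
    _ = (τ⁻¹ * τ⁻¹) • toEuclideanCLM (𝕜 := ℝ) (centerMat n * (A * Aᵀ) * centerMat n) v := by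
        simp only [map_mul, mul_apply_eq_comp]
    _ = v := by
        rw [hA, map_smul, _root_.smul_apply, hv, ← mul_inv, ← sq, inv_smul_smul₀ (pow_ne_zero 2 hτ)]

namespace IsGaussianVec

variable {Ω : Type*} [MeasurableSpace Ω] {P : Measure Ω} {n : ℕ} {Z : Ω → Fin n → ℝ}
  {m : Fin n → ℝ} {S : Matrix (Fin n) (Fin n) ℝ} {τ : ℝ}

lemma isProbabilityMeasure_map (hZ : IsGaussianVec P Z m S) : IsProbabilityMeasure (P.map Z) := by
  obtain ⟨A, -, hlaw⟩ := hZ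
  have : IsProbabilityMeasure (stdGaussianPi n) := by unfold stdGaussianPi; infer_instance
  rw [hlaw]
  exact Measure.isProbabilityMeasure_map (by fun_prop)

lemma aemeasurable (hZ : IsGaussianVec P Z m S) : AEMeasurable Z P :=
  have := hZ.isProbabilityMeasure_map
  aemeasurable_of_map_neZero inferInstance

lemma map_smul_centering (hZ : IsGaussianVec P Z m S) (hτ : τ ≠ 0)
    (hS : centerMat n * S * centerMat n = τ ^ 2 • centerMat n) :
    P.map (fun ω => τ⁻¹ • centering n (Z ω)) =
      (stdGaussian (centeredSubspace n)).map (τ⁻¹ • centering n m + ·) := by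
  have hZ_meas := hZ.aemeasurable
  obtain ⟨A, rfl, hlaw⟩ := hZ
  have hcentering : Measurable fun z => τ⁻¹ • centering n z := by fun_prop
  calc P.map (fun ω => τ⁻¹ • centering n (Z ω))
      = (P.map Z).map fun z => τ⁻¹ • centering n z :=
        (AEMeasurable.map_map_of_aemeasurable hcentering.aemeasurable hZ_meas).symm
    _ = (stdGaussianPi n).map fun x => τ⁻¹ • centering n m + τ⁻¹ • centering n (A *ᵥ x) := by
        rw [hlaw, Measure.map_map hcentering (by fun_prop)]
        simp only [Function.comp_def, map_add, smul_add]
    _ = (stdGaussian (centeredSubspace n)).map (τ⁻¹ • centering n m + ·) := by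
        rw [← map_stdGaussian_of_comp_adjoint_eq_id _
          (smul_orthogonalProjectionOnto_comp_adjoint_eq_id hτ hS), ← map_pi_eq_stdGaussian,
          Measure.map_map (by fun_prop) (by fun_prop), Measure.map_map (by fun_prop) (by fun_prop)]
        rfl

theorem meanVec_chi (hZ : IsGaussianVec P Z m S) (hτ : 0 < τ)
    (hS : centerMat n * S * centerMat n = τ ^ 2 • centerMat n) :
    meanVec P (fun ω => chi (Z ω)) =
      varrho (n - 1) (euclNorm (centerMat n *ᵥ m) / τ) • chi m := by
  have := hZ.isProbabilityMeasure_map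
  have := P.isProbabilityMeasure_of_map Z
  set w := τ⁻¹ • centering n m with hw
  have hmeas : AEMeasurable (fun ω => τ⁻¹ • centering n (Z ω)) P :=
    (by fun_prop : Measurable fun z => τ⁻¹ • centering n z).comp_aemeasurable hZ.aemeasurable
  have hchi : ∀ z, WithLp.toLp 2 (chi z) =
      ((NormedSpace.normalize (τ⁻¹ • centering n z) : centeredSubspace n) :
        EuclideanSpace ℝ (Fin n)) := fun z => by
    rw [toLp_chi, normalize_smul_of_pos (inv_pos.mpr hτ)]
  have hnorm : ‖w‖ = euclNorm (centerMat n *ᵥ m) / τ := by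
    rw [hw, norm_smul, norm_inv, Real.norm_of_nonneg hτ.le, norm_centering, div_eq_inv_mul]
  refine WithLp.toLp_injective 2 ?_
  calc WithLp.toLp 2 (meanVec P fun ω => chi (Z ω))
      = ∫ ω, ((NormedSpace.normalize (τ⁻¹ • centering n (Z ω)) : centeredSubspace n) :
          EuclideanSpace ℝ (Fin n)) ∂P := by
        rw [toLp_meanVec (integrable_toLp_chi hZ.aemeasurable)]
        simp only [hchi]
    _ = (∫ ω, NormedSpace.normalize (τ⁻¹ • centering n (Z ω)) ∂P : centeredSubspace n) :=
        (centeredSubspace n).subtypeₗᵢ.integral_comp_comm fun ω =>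
          NormedSpace.normalize (τ⁻¹ • centering n (Z ω))
    _ = (∫ x, NormedSpace.normalize x ∂(stdGaussian (centeredSubspace n)).map (w + ·) :
          centeredSubspace n) := by
        rw [← hZ.map_smul_centering hτ.ne' hS,
          integral_map hmeas measurable_normalize.aestronglyMeasurable]
    _ = WithLp.toLp 2 (varrho (n - 1) (euclNorm (centerMat n *ᵥ m) / τ) • chi m) := by
        rw [integral_normalize_map_const_add_stdGaussian, finrank_centeredSubspace, hnorm,
          Submodule.coe_smul, WithLp.toLp_smul, hchi]

end IsGaussianVec

theorem stmt7_general {Ω : Type*} [MeasurableSpace Ω] {P : Measure Ω} {n : ℕ} {τ : ℝ} (hτ : 0 < τ)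
    {S : Matrix (Fin n) (Fin n) ℝ} (hS : centerMat n * S * centerMat n = τ ^ 2 • centerMat n)
    {μ : Fin n → ℝ} {Z : Ω → Fin n → ℝ} (hZ : IsGaussianVec P Z μ S)
    (hPμ : centerMat n *ᵥ μ ≠ 0) :
    MD P (fun ω => chi (Z ω)) = chi μ ∧
    MRL P (fun ω => chi (Z ω)) = varrho (n - 1) (euclNorm (centerMat n *ᵥ μ) / τ) := by
  set r := varrho (n - 1) (euclNorm (centerMat n *ᵥ μ) / τ)
  have hr : 0 < r := varrho_pos _ (div_pos (euclNorm_pos hPμ) hτ)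
  have hmean : meanVec P (fun ω => chi (Z ω)) = r • chi μ := hZ.meanVec_chi hτ hS
  have hMRL : MRL P (fun ω => chi (Z ω)) = r := by
    rw [MRL, hmean, euclNorm_smul, euclNorm_chi hPμ, abs_of_pos hr, mul_one]
  refine ⟨?_, hMRL⟩
  rw [MRL] at hMRL
  rw [MD, hMRL, hmean, inv_smul_smul₀ hr.ne']

/-- MD and MRL of `χ(Z)` for `Z ~ N(μ, σ²Ξ)`. -/
theorem stmt7 {Ω : Type*} [MeasurableSpace Ω] (P : Measure Ω) [IsProbabilityMeasure P]
    {n : ℕ} (hn : 3 ≤ n) (σ ρ : ℝ) (hσ : 0 < σ)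
    (hρ₁ : -(1 / (n : ℝ)) < ρ) (hρ₂ : ρ < 1)
    (μ : Fin n → ℝ) (Z : Ω → Fin n → ℝ)
    (hgauss : IsGaussianVec P Z μ (σ ^ 2 • Ximat n ρ))
    (hPμ : (centerMat n).mulVec μ ≠ 0) :
    MD P (fun ω => chi (Z ω)) = chi μ ∧
    MRL P (fun ω => chi (Z ω)) =
      varrho (n - 1) (euclNorm ((centerMat n).mulVec μ) / (σ * Real.sqrt (1 - ρ))) :=
  stmt7_general (mul_pos hσ (Real.sqrt_pos.mpr (sub_pos.mpr hρ₂)))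
    (centerMat_mul_smul_Ximat_mul_centerMat n σ hρ₂.le) hgauss hPμ
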